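/- arXiv:1706.06922 — 6 statements merged into one kernel-verified Lean document; each statement's English description precedes it below -/
import Mathlib

section
/- Fix an integer k ≥ 1, set d = 2k², and fix a real ε with 0 < ε < 1/2. Consider instances whose items are k-element subsets u of Fin d, with weight vector w_u(i) = 1 − ε if i ∈ u and w_u(i) = 0 otherwise. For every deterministic online algorithm with free disposal A (defined on lists of k-element subsets of Fin d, with feasibility taken with respect to these weight vectors), there exists an instance l, all of whose entries are k-element subsets of Fin d, such that OPT(l) ≥ 1 and OPT(l) ≥ k · |A(l)|. (Hence no deterministic algorithm has competitive ratio o(k), even for the utility function f(S) = |S|.) -/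
/-!
Since nonzero weights lie in `(1/2, 1]`, feasible selections are exactly those with pairwise
disjoint supports. The adversary keeps the algorithm at one item at most. It splits the past items
into two packings `P` and `Q` so that the held item `h` lies in `P` and meets each item of `Q` in
at most one element. As long as `Q` has fewer than `k` items, some element `e` of `h` lies in no
item of `Q`; the next item consists of `e` and `k - 1` fresh elements. It joins `Q`, and it
conflicts with `h`. If the algorithm rejects it, the invariant persists; if the algorithm swaps
`h` for it, the invariant holds with `P` and `Q` exchanged. After at most `2k - 1` items, which
use at most `k * (2k - 1)` dimensions, one of the two packings has size `k`.
-/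

open scoped BigOperators

/-- The weight of the item at position `p` of the list `l` on dimension `i`
(zero if `p` is out of range). -/
def weightAt {Item : Type*} {d : ℕ} (w : Item → Fin d → ℝ) (l : List Item)
    (p : ℕ) (i : Fin d) : ℝ :=
  (l[p]?.map fun u => w u i).getD 0

/-- A finite set of positions `P` is feasible for the instance `l` if all positions are
valid indices and on every dimension the total weight is at most `1`. -/
def Feasible {Item : Type*} {d : ℕ} (w : Item → Fin d → ℝ) (l : List Item)
    (P : Finset ℕ) : Prop :=
  (∀ p ∈ P, p < l.length) ∧ ∀ i : Fin d, ∑ p ∈ P, weightAt w l p i ≤ 1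

/-- `OPT w l` is the maximum cardinality of a feasible set of positions for `l`. -/
noncomputable def OPT {Item : Type*} {d : ℕ} (w : Item → Fin d → ℝ) (l : List Item) : ℕ :=
  sSup {n | ∃ P : Finset ℕ, Feasible w l P ∧ P.card = n}

/-- A deterministic online algorithm with free disposal: it selects a set of positions,
when a new item arrives it may accept it and dispose of previously kept items (but never
recover discarded ones), and its selection is always feasible. -/
structure OnlineAlg {Item : Type*} {d : ℕ} (w : Item → Fin d → ℝ) where
  A : List Item → Finset ℕ
  online : ∀ (l : List Item) (u : Item), A (l ++ [u]) ⊆ A l ∪ {l.length}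
  feasible : ∀ l : List Item, Feasible w l (A l)

/-- Weight vectors of items that are `k`-element subsets of `Fin (2*k^2)`:
weight `1 - ε` on each dimension of the subset, `0` elsewhere. -/
noncomputable def W0 (k : ℕ) (ε : ℝ)
    (u : {u : Finset (Fin (2 * k ^ 2)) // u.card = k}) (i : Fin (2 * k ^ 2)) : ℝ :=
  if i ∈ u.val then 1 - ε else 0

section Feasibility

variable {Item : Type*} {d : ℕ} {w : Item → Fin d → ℝ} {l : List Item} {P : Finset ℕ}

theorem Feasible.card_le_OPT (hP : Feasible w l P) : P.card ≤ OPT w l := by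
  refine le_csSup ⟨l.length, ?_⟩ ⟨P, hP, rfl⟩
  rintro _ ⟨Q, hQ, rfl⟩
  simpa using Finset.card_le_card fun q hq => Finset.mem_range.2 (hQ.1 q hq)

theorem weightAt_eq_zero_or_eq (w : Item → Fin d → ℝ) (l : List Item) (p : ℕ) :
    weightAt w l p = 0 ∨ ∃ u, weightAt w l p = w u := by
  cases h : l[p]? with
  | none => exact .inl (funext fun i => by simp [weightAt, h])
  | some u => exact .inr ⟨u, funext fun i => by simp [weightAt, h]⟩

/-- The dimensions on which the item at position `p` of `l` has nonzero weight; empty if `p` is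
out of range. -/
noncomputable def supportAt (w : Item → Fin d → ℝ) (l : List Item) (p : ℕ) : Finset (Fin d) :=
  {i | weightAt w l p i ≠ 0}

theorem mem_supportAt {p : ℕ} {i : Fin d} : i ∈ supportAt w l p ↔ weightAt w l p i ≠ 0 := by
  simp [supportAt]

theorem supportAt_concat_of_lt {p : ℕ} (hp : p < l.length) (u : Item) :
    supportAt w (l ++ [u]) p = supportAt w l p := by
  ext i
  simp only [mem_supportAt, weightAt, List.getElem?_append_left hp]

theorem supportAt_concat_length {u : Item} {s : Finset (Fin d)}
    (hu : Function.support (w u) = s) : supportAt w (l ++ [u]) l.length = s := by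
  ext i
  rw [mem_supportAt, ← Finset.mem_coe, ← hu, Function.mem_support]
  simp [weightAt]

theorem feasible_of_pairwiseDisjoint_supportAt (hw : ∀ u i, w u i ≤ 1)
    (hlt : ∀ p ∈ P, p < l.length) (hP : (P : Set ℕ).PairwiseDisjoint (supportAt w l)) :
    Feasible w l P := by
  refine ⟨hlt, fun i => ?_⟩
  by_cases hi : ∃ p ∈ P, i ∈ supportAt w l p
  · obtain ⟨p, hp, hip⟩ := hi
    have h_single : ∑ q ∈ P, weightAt w l q i = weightAt w l p i :=
      Finset.sum_eq_single_of_mem p hp fun q hq hqp => by_contra fun hiq =>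
        Finset.disjoint_left.1 (hP hq hp hqp) (mem_supportAt.2 hiq) hip
    rw [h_single]
    rcases weightAt_eq_zero_or_eq w l p with h | ⟨u, h⟩ <;> simp [h, hw]
  · have h_zero : ∑ p ∈ P, weightAt w l p i = 0 :=
      Finset.sum_eq_zero fun p hp => by_contra fun hip => hi ⟨p, hp, mem_supportAt.2 hip⟩
    exact h_zero.trans_le zero_le_one

theorem Feasible.pairwiseDisjoint_supportAt (hw : ∀ u i, w u i ≠ 0 → 1 / 2 < w u i)
    (hP : Feasible w l P) : (P : Set ℕ).PairwiseDisjoint (supportAt w l) := by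
  have h_half (p : ℕ) (i : Fin d) (hi : weightAt w l p i ≠ 0) : 1 / 2 < weightAt w l p i := by
    rcases weightAt_eq_zero_or_eq w l p with h | ⟨u, h⟩
    · simp [h] at hi
    · rw [h] at hi ⊢
      exact hw u i hi
  have h_nonneg (p : ℕ) (i : Fin d) : 0 ≤ weightAt w l p i := by
    by_cases hi : weightAt w l p i = 0
    · exact hi.ge
    · linarith [h_half p i hi]
  refine fun p hp q hq hpq => Finset.disjoint_left.2 fun i hip hiq => ?_
  have h_pair : weightAt w l p i + weightAt w l q i ≤ ∑ r ∈ P, weightAt w l r i :=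
    Finset.add_le_sum (fun r _ => h_nonneg r i) hp hq hpq
  linarith [hP.2 i, h_half p i (mem_supportAt.1 hip), h_half q i (mem_supportAt.1 hiq)]

end Feasibility

section SetFamilies

variable {ι α : Type*} {t : ι → Finset α}

theorem exists_mem_forall_notMem_of_card_inter_le_one [DecidableEq α] {s : Finset α} {Q : Finset ι}
    (hQ : Q.card < s.card) (hinter : ∀ q ∈ Q, (s ∩ t q).card ≤ 1) :
    ∃ e ∈ s, ∀ q ∈ Q, e ∉ t q := by
  have hcard : (Q.biUnion fun q => s ∩ t q).card < s.card :=
    (Finset.card_biUnion_le_card_mul Q _ 1 hinter).trans_lt (by simpa using hQ)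
  obtain ⟨e, hes, he⟩ := Finset.exists_mem_notMem_of_card_lt_card hcard
  exact ⟨e, hes, fun q hq heq =>
    he (Finset.mem_biUnion.2 ⟨q, hq, Finset.mem_inter.2 ⟨hes, heq⟩⟩)⟩

theorem exists_card_eq_forall_disjoint [Fintype α] {I : Finset ι} {k m : ℕ}
    (ht : ∀ p ∈ I, (t p).card ≤ k) (hm : I.card * k + m ≤ Fintype.card α) :
    ∃ F : Finset α, F.card = m ∧ ∀ p ∈ I, Disjoint F (t p) := by
  classical
  have hroom : m ≤ (I.biUnion t)ᶜ.card := by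
    rw [Finset.card_compl]
    have := Finset.card_biUnion_le_card_mul I t k ht
    omega
  obtain ⟨F, hF, hFm⟩ := Finset.exists_subset_card_eq hroom
  exact ⟨F, hFm, (Finset.disjoint_biUnion_right F I t).1
    (Finset.subset_compl_iff_disjoint_right.1 hF)⟩

/-- The adversary's next request `s` when the algorithm holds `t h`: a `k`-set that conflicts with
`t h` and can be added to the packing `Q`, while meeting each member of the packing `P` in at most
one element. -/
structure IsChallenge [DecidableEq α] (t : ι → Finset α) (k : ℕ) (h : ι) (P Q : Finset ι)
    (s : Finset α) : Prop where
  card_eq : s.card = k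
  inter_nonempty : (t h ∩ s).Nonempty
  card_inter_le_one : ∀ p ∈ P, (s ∩ t p).card ≤ 1
  disjoint : ∀ q ∈ Q, Disjoint s (t q)

theorem exists_isChallenge_of_card_lt [DecidableEq α] [DecidableEq ι] [Fintype α]
    {P Q : Finset ι} {k : ℕ} {h : ι} (hh : h ∈ P) (ht : ∀ p ∈ P ∪ Q, (t p).card = k)
    (hQ : Q.card < k) (hinter : ∀ q ∈ Q, (t h ∩ t q).card ≤ 1)
    (hroom : ((P ∪ Q).card + 1) * k ≤ Fintype.card α) : ∃ s, IsChallenge t k h P Q s := by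
  have hhPQ : h ∈ P ∪ Q := Finset.mem_union_left Q hh
  obtain ⟨e, heh, heQ⟩ :=
    exists_mem_forall_notMem_of_card_inter_le_one (hQ.trans_eq (ht h hhPQ).symm) hinter
  obtain ⟨F, hF, hF_disjoint⟩ :
      ∃ F : Finset α, F.card = k - 1 ∧ ∀ p ∈ P ∪ Q, Disjoint F (t p) :=
    exists_card_eq_forall_disjoint (fun p hp => (ht p hp).le) (by rw [add_one_mul] at hroom; omega)
  have heF : e ∉ F := fun heF => Finset.disjoint_left.1 (hF_disjoint h hhPQ) heF heh
  refine ⟨insert e F, ?_, ⟨e, by simp [heh]⟩, fun p hp => ?_, fun q hq => ?_⟩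
  · rw [Finset.card_insert_of_notMem heF, hF]
    omega
  · have h_subset : insert e F ∩ t p ⊆ {e} := by
      have hFp := Finset.disjoint_left.1 (hF_disjoint p (Finset.mem_union_left Q hp))
      grind
    simpa using Finset.card_le_card h_subset
  · exact Finset.disjoint_insert_left.2 ⟨heQ q hq, hF_disjoint q (Finset.mem_union_right P hq)⟩

end SetFamilies

section Adversary

variable {Item : Type*} {d k : ℕ} {w : Item → Fin d → ℝ} {l : List Item} {P Q : Finset ℕ}

/-- The positions of `l` split into two families `P` and `Q` of items with pairwise disjoint
supports, and all items of `l` have supports of size `k`. `P` and `Q` are not required to be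
disjoint, since only `l.length ≤ P.card + Q.card` matters. -/
structure TwoPacking (w : Item → Fin d → ℝ) (k : ℕ) (l : List Item) (P Q : Finset ℕ) : Prop where
  union_eq : P ∪ Q = Finset.range l.length
  card_supportAt : ∀ p ∈ Finset.range l.length, (supportAt w l p).card = k
  pairwiseDisjoint_left : (P : Set ℕ).PairwiseDisjoint (supportAt w l)
  pairwiseDisjoint_right : (Q : Set ℕ).PairwiseDisjoint (supportAt w l)

namespace TwoPacking

theorem symm (hPQ : TwoPacking w k l P Q) : TwoPacking w k l Q P :=
  ⟨Finset.union_comm P Q ▸ hPQ.union_eq, hPQ.card_supportAt, hPQ.pairwiseDisjoint_right,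
    hPQ.pairwiseDisjoint_left⟩

theorem subset_range_left (hPQ : TwoPacking w k l P Q) : P ⊆ Finset.range l.length :=
  hPQ.union_eq ▸ Finset.subset_union_left

theorem lt_length_left (hPQ : TwoPacking w k l P Q) {p : ℕ} (hp : p ∈ P) : p < l.length :=
  Finset.mem_range.1 (hPQ.subset_range_left hp)

theorem length_le (hPQ : TwoPacking w k l P Q) : l.length ≤ P.card + Q.card := by
  simpa [hPQ.union_eq] using Finset.card_union_le P Q

theorem card_left_le_OPT (hw : ∀ u i, w u i ≤ 1) (hPQ : TwoPacking w k l P Q) :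
    P.card ≤ OPT w l :=
  (feasible_of_pairwiseDisjoint_supportAt hw (fun _ => hPQ.lt_length_left)
    hPQ.pairwiseDisjoint_left).card_le_OPT

theorem concat (hPQ : TwoPacking w k l P Q) {u : Item} {s : Finset (Fin d)}
    (hu : Function.support (w u) = s) (hs : s.card = k)
    (hsQ : ∀ q ∈ Q, Disjoint s (supportAt w l q)) :
    TwoPacking w k (l ++ [u]) P (insert l.length Q) where
  union_eq := by
    rw [Finset.union_insert, hPQ.union_eq, List.length_append, List.length_singleton,
      Finset.range_add_one]
  card_supportAt p hp := by
    rw [List.length_append, List.length_singleton, Finset.range_add_one, Finset.mem_insert] at hp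
    rcases hp with rfl | hp
    · rw [supportAt_concat_length hu, hs]
    · rw [supportAt_concat_of_lt (Finset.mem_range.1 hp), hPQ.card_supportAt p hp]
  pairwiseDisjoint_left := hPQ.pairwiseDisjoint_left.mono_on fun p hp =>
    (supportAt_concat_of_lt (hPQ.lt_length_left hp) u).le
  pairwiseDisjoint_right := by
    rw [Finset.coe_insert]
    refine Set.PairwiseDisjoint.insert (hPQ.pairwiseDisjoint_right.mono_on fun q hq =>
      (supportAt_concat_of_lt (hPQ.symm.lt_length_left hq) u).le) fun q hq _ => ?_
    rw [supportAt_concat_length hu, supportAt_concat_of_lt (hPQ.symm.lt_length_left hq)]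
    exact hsQ q hq

end TwoPacking

/-- The adversary's invariant: `alg` holds at most the item at position `h`, which belongs to `P`
and meets every item of `Q` in at most one dimension. -/
structure AdversaryState (alg : OnlineAlg w) (k : ℕ) (l : List Item) (h : ℕ) (P Q : Finset ℕ) :
    Prop extends TwoPacking w k l P Q where
  selection_subset : alg.A l ⊆ {h}
  mem_left : h ∈ P
  card_inter_le_one : ∀ q ∈ Q, (supportAt w l h ∩ supportAt w l q).card ≤ 1

namespace AdversaryState

variable {alg : OnlineAlg w} {h : ℕ} {u : Item} {s : Finset (Fin d)}

theorem singleton (alg : OnlineAlg w) (hu : Function.support (w u) = s) (hs : s.card = k) :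
    AdversaryState alg k [u] 0 {0} ∅ where
  union_eq := by simp
  card_supportAt p hp := by
    obtain rfl : p = 0 := by simpa using hp
    exact (congrArg Finset.card (supportAt_concat_length (l := []) hu)).trans hs
  pairwiseDisjoint_left := by simp
  pairwiseDisjoint_right := by simp
  selection_subset p hp := by simpa using (alg.feasible [u]).1 p hp
  mem_left := Finset.mem_singleton_self 0
  card_inter_le_one := by simp

theorem exists_isChallenge (hS : AdversaryState alg k l h P Q) (hd : k * (2 * k - 1) ≤ d)
    (hP : P.card < k) (hQ : Q.card < k) : ∃ s, IsChallenge (supportAt w l) k h P Q s := by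
  have hroom : ((P ∪ Q).card + 1) * k ≤ Fintype.card (Fin d) := by
    rw [Fintype.card_fin, mul_comm]
    have := Finset.card_union_le P Q
    exact (Nat.mul_le_mul_left k (by omega)).trans hd
  exact exists_isChallenge_of_card_lt hS.mem_left (hS.union_eq ▸ hS.card_supportAt) hQ
    hS.card_inter_le_one hroom

theorem concat_of_reject (hS : AdversaryState alg k l h P Q)
    (hs : IsChallenge (supportAt w l) k h P Q s) (hu : Function.support (w u) = s)
    (hreject : l.length ∉ alg.A (l ++ [u])) :
    AdversaryState alg k (l ++ [u]) h P (insert l.length Q) where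
  toTwoPacking := hS.concat hu hs.card_eq hs.disjoint
  selection_subset p hp := by
    rcases Finset.mem_union.1 (alg.online l u hp) with hp_old | hp_new
    · exact hS.selection_subset hp_old
    · exact absurd (Finset.mem_singleton.1 hp_new ▸ hp) hreject
  mem_left := hS.mem_left
  card_inter_le_one q hq := by
    rw [supportAt_concat_of_lt (hS.lt_length_left hS.mem_left)]
    rcases Finset.mem_insert.1 hq with rfl | hq
    · rw [supportAt_concat_length hu, Finset.inter_comm]
      exact hs.card_inter_le_one h hS.mem_left
    · rw [supportAt_concat_of_lt (hS.symm.lt_length_left hq)]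
      exact hS.card_inter_le_one q hq

theorem concat_of_accept (hw : ∀ u i, w u i ≠ 0 → 1 / 2 < w u i)
    (hS : AdversaryState alg k l h P Q) (hs : IsChallenge (supportAt w l) k h P Q s)
    (hu : Function.support (w u) = s) (haccept : l.length ∈ alg.A (l ++ [u])) :
    AdversaryState alg k (l ++ [u]) l.length (insert l.length Q) P where
  toTwoPacking := (hS.concat hu hs.card_eq hs.disjoint).symm
  selection_subset p hp := by
    rcases Finset.mem_union.1 (alg.online l u hp) with hp_old | hp_new
    · obtain rfl := Finset.mem_singleton.1 (hS.selection_subset hp_old)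
      have hp_lt := hS.lt_length_left hS.mem_left
      have h_disjoint : Disjoint (supportAt w l p) s := by
        simpa only [Function.onFun, supportAt_concat_of_lt hp_lt, supportAt_concat_length hu] using
          (alg.feasible (l ++ [u])).pairwiseDisjoint_supportAt hw hp haccept hp_lt.ne
      exact absurd h_disjoint (Finset.not_disjoint_iff_nonempty_inter.2 hs.inter_nonempty)
    · exact hp_new
  mem_left := Finset.mem_insert_self _ _
  card_inter_le_one p hp := by
    rw [supportAt_concat_length hu, supportAt_concat_of_lt (hS.lt_length_left hp)]
    exact hs.card_inter_le_one p hp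

theorem exists_concat (hw : ∀ u i, w u i ≠ 0 → 1 / 2 < w u i)
    (hitems : ∀ s : Finset (Fin d), s.card = k → ∃ u, Function.support (w u) = s)
    (hd : k * (2 * k - 1) ≤ d) (hS : AdversaryState alg k l h P Q) (hP : P.card < k)
    (hQ : Q.card < k) : ∃ u h' P' Q', AdversaryState alg k (l ++ [u]) h' P' Q' := by
  obtain ⟨s, hs⟩ := hS.exists_isChallenge hd hP hQ
  obtain ⟨u, hu⟩ := hitems s hs.card_eq
  by_cases haccept : l.length ∈ alg.A (l ++ [u])
  · exact ⟨u, _, _, _, hS.concat_of_accept hw hs hu haccept⟩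
  · exact ⟨u, _, _, _, hS.concat_of_reject hs hu haccept⟩

theorem exists_le_card (hw : ∀ u i, w u i ≠ 0 → 1 / 2 < w u i)
    (hitems : ∀ s : Finset (Fin d), s.card = k → ∃ u, Function.support (w u) = s)
    (hk : 1 ≤ k) (hd : k * (2 * k - 1) ≤ d) (alg : OnlineAlg w) :
    ∃ l h P Q, AdversaryState alg k l h P Q ∧ (k ≤ P.card ∨ k ≤ Q.card) := by
  by_contra! hsmall
  have hlong (n : ℕ) : ∃ l h P Q, AdversaryState alg k l h P Q ∧ l.length = n + 1 := by
    induction n with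
    | zero =>
      have hkd : k ≤ d := (Nat.le_mul_of_pos_right k (by omega)).trans hd
      obtain ⟨s, -, hs⟩ := Finset.exists_subset_card_eq (s := (Finset.univ : Finset (Fin d)))
        (by simpa using hkd)
      obtain ⟨u, hu⟩ := hitems s hs
      exact ⟨[u], 0, {0}, ∅, singleton alg hu hs, rfl⟩
    | succ n ih =>
      obtain ⟨l, h, P, Q, hS, hl⟩ := ih
      obtain ⟨hP, hQ⟩ := hsmall l h P Q hS
      obtain ⟨u, h', P', Q', hS'⟩ := hS.exists_concat hw hitems hd hP hQ
      exact ⟨l ++ [u], h', P', Q', hS', by simp [hl]⟩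
  obtain ⟨l, h, P, Q, hS, hl⟩ := hlong (2 * k)
  have hPQ := hsmall l h P Q hS
  have hlength := hS.length_le
  omega

end AdversaryState

end Adversary

theorem statement0_general {Item : Type*} {d k : ℕ} (hk : 1 ≤ k) (hd : k * (2 * k - 1) ≤ d)
    {w : Item → Fin d → ℝ} (hw_le : ∀ u i, w u i ≤ 1)
    (hw_half : ∀ u i, w u i ≠ 0 → 1 / 2 < w u i)
    (hitems : ∀ s : Finset (Fin d), s.card = k → ∃ u, Function.support (w u) = s)
    (alg : OnlineAlg w) :
    ∃ l : List Item, k ≤ OPT w l ∧ (alg.A l).card ≤ 1 := by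
  obtain ⟨l, h, P, Q, hS, hPQ⟩ := AdversaryState.exists_le_card hw_half hitems hk hd alg
  have hOPT : k ≤ OPT w l := hPQ.elim (fun hP => hP.trans (hS.card_left_le_OPT hw_le))
    fun hQ => hQ.trans (hS.symm.card_left_le_OPT hw_le)
  exact ⟨l, hOPT, by simpa using Finset.card_le_card hS.selection_subset⟩

theorem W0_le_one {k : ℕ} {ε : ℝ} (hε : 0 ≤ ε) (u : {u : Finset (Fin (2 * k ^ 2)) // u.card = k})
    (i : Fin (2 * k ^ 2)) : W0 k ε u i ≤ 1 := by
  unfold W0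
  split_ifs <;> linarith

theorem half_lt_W0 {k : ℕ} {ε : ℝ} (hε : ε < 1 / 2)
    (u : {u : Finset (Fin (2 * k ^ 2)) // u.card = k}) (i : Fin (2 * k ^ 2))
    (hi : W0 k ε u i ≠ 0) : 1 / 2 < W0 k ε u i := by
  unfold W0 at hi ⊢
  split_ifs at hi ⊢
  · linarith
  · exact absurd rfl hi

theorem support_W0 {k : ℕ} {ε : ℝ} (hε : ε ≠ 1)
    (u : {u : Finset (Fin (2 * k ^ 2)) // u.card = k}) :
    Function.support (W0 k ε u) = (u.1 : Set (Fin (2 * k ^ 2))) := by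
  ext i
  simp [W0, sub_ne_zero.2 hε.symm]

theorem mul_two_mul_sub_one_le (k : ℕ) : k * (2 * k - 1) ≤ 2 * k ^ 2 :=
  calc k * (2 * k - 1) ≤ k * (2 * k) := Nat.mul_le_mul_left k (Nat.sub_le _ 1)
    _ = 2 * k ^ 2 := by ring

/-- Hardness for deterministic algorithms with slack: with `d = 2k²` dimensions,
items being `k`-subsets with all non-zero weights equal to `1 - ε`, every deterministic
online algorithm with free disposal has an instance on which `OPT ≥ 1` and
`OPT ≥ k · |A(l)|`. -/
theorem statement0 (k : ℕ) (hk : 1 ≤ k) (ε : ℝ) (hε0 : 0 < ε) (hε1 : ε < 1 / 2)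
    (alg : OnlineAlg (W0 k ε)) :
    ∃ l : List {u : Finset (Fin (2 * k ^ 2)) // u.card = k},
      1 ≤ OPT (W0 k ε) l ∧ k * (alg.A l).card ≤ OPT (W0 k ε) l := by
  obtain ⟨l, hOPT, hA⟩ := statement0_general hk (mul_two_mul_sub_one_le k) (W0_le_one hε0.le)
    (half_lt_W0 hε1) (fun s hs => ⟨⟨s, hs⟩, support_W0 (by linarith) _⟩) alg
  exact ⟨l, hk.trans hOPT, (mul_le_of_le_one_right k.zero_le hA).trans hOPT⟩
end

section
/- Fix an integer n ≥ 2, set ε = 1/(2n) (so 0 < ε ≤ 1/4), and fix the dimension d = k ≥ 1. Consider items that are pairs (v, w) of a nonnegative real value v and a weight vector w : Fin d → ℝ with entries in [0, 1 − ε]. For a deterministic online algorithm with free disposal A, let ALG(l) = ∑_{p ∈ A(l)} v_{l_p} and let OPT(l) be the maximum of ∑_{p ∈ P} v_{l_p} over all feasible sets P of positions of l. Then for every such algorithm A there exists an instance l (all of whose items have weight vectors with entries in [0, 1 − ε]) such that OPT(l) ≥ 1 and 2 · OPT(l) ≥ √(k/ε) · ALG(l). (Hence every deterministic algorithm has competitive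 ratio Ω(√(k/ε)) for the online vector packing problem with weight vectors in [0, 1−ε]^d, even when the utility function is linear and d = k.) -/
/-!
The instance starts with an item of value `1` that fills every dimension up to `1 - ε`, followed by
`m * k` small items of value `1 / √(m * k)`, each occupying a single dimension with a weight
exceeding `ε` and `m` of them fitting together into every dimension. The large item conflicts with
each small one. An algorithm that never disposes of the large item ends with value `1`, while the
small items together are worth `√(m * k)`. Otherwise stop as soon as the large item is missing: at
that moment only the small item that has just arrived can be kept, whereas the large item alone is
worth `1`. Either way the ratio is at least `√(m * k)`, and `m` can be taken of order `1 / ε`.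
-/

open scoped BigOperators

/-- Items for the valued problem in dimension `k` with slack `ε`: a pair of a
nonnegative value and a weight vector with entries in `[0, 1 - ε]`. -/
def Item4 (k : ℕ) (ε : ℝ) :=
  {p : ℝ × (Fin k → ℝ) // 0 ≤ p.1 ∧ ∀ i : Fin k, 0 ≤ p.2 i ∧ p.2 i ≤ 1 - ε}

/-- The weight vector of a valued item. -/
def W4 (k : ℕ) (ε : ℝ) (u : Item4 k ε) : Fin k → ℝ := u.val.2

/-- The value of the item at position `p` of `l` (zero if out of range). -/
noncomputable def valAt (k : ℕ) (ε : ℝ) (l : List (Item4 k ε)) (p : ℕ) : ℝ :=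
  (l[p]?.map fun u => u.val.1).getD 0

/-- The optimal total value over all feasible sets of positions of `l`. -/
noncomputable def OPTval (k : ℕ) (ε : ℝ) (l : List (Item4 k ε)) : ℝ :=
  sSup {x : ℝ | ∃ P : Finset ℕ, Feasible (W4 k ε) l P ∧ ∑ p ∈ P, valAt k ε l p = x}

section MapRange

variable {Item : Type*} {d : ℕ} {w : Item → Fin d → ℝ} {u : ℕ → Item}

lemma weightAt_map_range {p j : ℕ} (hp : p < j) (i : Fin d) :
    weightAt w ((List.range j).map u) p i = w (u p) i := by
  simp [weightAt, hp]

lemma feasible_map_range_iff {j : ℕ} {P : Finset ℕ} :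
    Feasible w ((List.range j).map u) P ↔
      (∀ p ∈ P, p < j) ∧ ∀ i, ∑ p ∈ P, w (u p) i ≤ 1 := by
  simp only [Feasible, List.length_map, List.length_range]
  refine and_congr_right fun hP => forall_congr' fun i => ?_
  rw [Finset.sum_congr rfl fun p hp => weightAt_map_range (hP p hp) i]

namespace OnlineAlg

lemma map_range_zero_eq_empty (alg : OnlineAlg w) : alg.A ((List.range 0).map u) = ∅ :=
  Finset.eq_empty_of_forall_notMem fun p hp =>
    p.not_lt_zero ((feasible_map_range_iff.1 (alg.feasible _)).1 p hp)

lemma map_range_succ_subset (alg : OnlineAlg w) (j : ℕ) :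
    alg.A ((List.range (j + 1)).map u) ⊆ alg.A ((List.range j).map u) ∪ {j} := by
  simpa [List.range_succ] using alg.online ((List.range j).map u) (u j)

theorem exists_subset_singleton_or_eq_singleton_zero (alg : OnlineAlg w) {N : ℕ}
    (hconflict : ∀ t < N, ∃ i, 1 < w (u 0) i + w (u (t + 1)) i) :
    (∃ t, alg.A ((List.range (t + 1)).map u) ⊆ {t} ∧ 0 ∉ alg.A ((List.range (t + 1)).map u)) ∨
      alg.A ((List.range (N + 1)).map u) = {0} := by
  induction N with
  | zero =>
    have hsub : alg.A ((List.range 1).map u) ⊆ {0} := by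
      simpa only [map_range_zero_eq_empty, Finset.empty_union] using
        alg.map_range_succ_subset (u := u) 0
    by_cases hzero : 0 ∈ alg.A ((List.range 1).map u)
    · exact .inr (hsub.antisymm (Finset.singleton_subset_iff.2 hzero))
    · exact .inl ⟨0, hsub, hzero⟩
  | succ N ih =>
    rcases ih fun t ht => hconflict t (ht.trans N.lt_succ_self) with hdropped | hkept
    · exact .inl hdropped
    have hsub : alg.A ((List.range (N + 2)).map u) ⊆ {0, N + 1} := by
      rw [Finset.insert_eq, ← hkept]
      exact alg.map_range_succ_subset (N + 1)
    by_cases hzero : 0 ∈ alg.A ((List.range (N + 2)).map u)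
    · have hlast : N + 1 ∉ alg.A ((List.range (N + 2)).map u) := fun hlast => by
        obtain ⟨i, hi⟩ := hconflict N N.lt_succ_self
        have hle := (feasible_map_range_iff.1 (alg.feasible ((List.range (N + 2)).map u))).2 i
        rw [hsub.antisymm (Finset.insert_subset hzero (Finset.singleton_subset_iff.2 hlast)),
          Finset.sum_pair N.succ_ne_zero.symm] at hle
        exact hle.not_gt hi
      rw [Finset.pair_comm, Finset.subset_insert_iff_of_notMem hlast] at hsub
      exact .inr (hsub.antisymm (Finset.singleton_subset_iff.2 hzero))
    · exact .inl ⟨N + 1, (Finset.subset_insert_iff_of_notMem hzero).1 hsub, hzero⟩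

end OnlineAlg

end MapRange

section Value

variable {k : ℕ} {ε : ℝ}

lemma valAt_nonneg (l : List (Item4 k ε)) (p : ℕ) : 0 ≤ valAt k ε l p := by
  unfold valAt
  cases l[p]? with
  | none => exact le_rfl
  | some u => exact u.2.1

lemma valAt_map_range {u : ℕ → Item4 k ε} {p j : ℕ} (hp : p < j) :
    valAt k ε ((List.range j).map u) p = (u p).val.1 := by
  simp [valAt, hp]

lemma sum_valAt_le_OPTval {l : List (Item4 k ε)} {P : Finset ℕ} (hP : Feasible (W4 k ε) l P) :
    ∑ p ∈ P, valAt k ε l p ≤ OPTval k ε l := by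
  refine le_csSup ⟨∑ p ∈ Finset.range l.length, valAt k ε l p, ?_⟩ ⟨P, hP, rfl⟩
  rintro x ⟨Q, hQ, rfl⟩
  exact Finset.sum_le_sum_of_subset_of_nonneg (fun p hp => Finset.mem_range.2 (hQ.1 p hp))
    fun p _ _ => valAt_nonneg l p

lemma sum_val_le_OPTval_map_range {u : ℕ → Item4 k ε} {j : ℕ} {P : Finset ℕ}
    (hP : ∀ p ∈ P, p < j) (hweight : ∀ i, ∑ p ∈ P, W4 k ε (u p) i ≤ 1) :
    ∑ p ∈ P, (u p).val.1 ≤ OPTval k ε ((List.range j).map u) := by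
  rw [← Finset.sum_congr rfl fun p hp => valAt_map_range (hP p hp)]
  exact sum_valAt_le_OPTval (feasible_map_range_iff.2 ⟨hP, hweight⟩)

end Value

lemma card_filter_range_mul_mod_eq (m : ℕ) {k : ℕ} (i : Fin k) :
    ((Finset.range (m * k)).filter fun t => t % k = i).card = m := by
  have hmod : (fun t => t % k = i) = (· ≡ i [MOD k]) := by
    simp only [Nat.ModEq, Nat.mod_eq_of_lt i.2]
  simp only [hmod, ← Nat.count_eq_card_filter_range, Nat.count_modEq_card _ i.pos]
  simp [i.pos]

section HardSequence

variable {k : ℕ} {ε v w : ℝ}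

/-- The adversarial sequence of items: a large item of value `1` and weight `1 - ε` in every
dimension, followed by small items of value `v`, the `t`-th of which has weight `w` in dimension
`t % k` only. -/
def hardItem (k : ℕ) (hv : 0 ≤ v) (hw₀ : 0 ≤ w) (hw : w ≤ 1 - ε) : ℕ → Item4 k ε
  | 0 => ⟨(1, fun _ => 1 - ε), zero_le_one, fun _ => ⟨hw₀.trans hw, le_rfl⟩⟩
  | t + 1 => ⟨(v, fun i => if t % k = i then w else 0), hv, fun i => by
      dsimp only
      split_ifs
      exacts [⟨hw₀, hw⟩, ⟨le_rfl, hw₀.trans hw⟩]⟩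

variable (hv : 0 ≤ v) (hw₀ : 0 ≤ w) (hw : w ≤ 1 - ε)

lemma exists_one_lt_hardItem_zero_add_succ (hεw : ε < w) {m t : ℕ} (ht : t < m * k) :
    ∃ i, 1 < W4 k ε (hardItem k hv hw₀ hw 0) i + W4 k ε (hardItem k hv hw₀ hw (t + 1)) i := by
  have hk : 0 < k := Nat.pos_of_mul_pos_left (t.zero_le.trans_lt ht)
  refine ⟨⟨t % k, t.mod_lt hk⟩, ?_⟩
  simp only [W4, hardItem, if_true]
  linarith

lemma one_le_OPTval_hardItem (hε : 0 ≤ ε) (t : ℕ) :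
    1 ≤ OPTval k ε ((List.range (t + 1)).map (hardItem k hv hw₀ hw)) := by
  have hle := sum_val_le_OPTval_map_range (u := hardItem k hv hw₀ hw) (j := t + 1) (P := {0})
    (by simp) (by simp [W4, hardItem, hε])
  simpa [hardItem] using hle

lemma mul_le_OPTval_hardItem {m : ℕ} (hmw : m * w ≤ 1) :
    m * k * v ≤ OPTval k ε ((List.range (m * k + 1)).map (hardItem k hv hw₀ hw)) := by
  have hle := sum_val_le_OPTval_map_range (u := hardItem k hv hw₀ hw) (j := m * k + 1)
    (P := (Finset.range (m * k)).map (addRightEmbedding 1)) (by simp) fun i => by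
      simpa [W4, hardItem, Finset.sum_ite, card_filter_range_mul_mod_eq] using hmw
  simpa [hardItem] using hle

lemma sum_valAt_hardItem_le {t : ℕ} {P : Finset ℕ} (hP : P ⊆ {t}) (hzero : 0 ∉ P) :
    ∑ p ∈ P, valAt k ε ((List.range (t + 1)).map (hardItem k hv hw₀ hw)) p ≤ v := by
  rcases Finset.subset_singleton_iff.1 hP with rfl | rfl
  · simpa using hv
  · obtain ⟨s, rfl⟩ := Nat.exists_eq_succ_of_ne_zero (Finset.notMem_singleton.1 hzero).symm
    rw [Finset.sum_singleton, valAt_map_range (Nat.lt_succ_self _)]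
    rfl

end HardSequence

theorem exists_sqrt_mul_sum_valAt_le_OPTval {k m : ℕ} {ε w : ℝ} (hε : 0 ≤ ε) (hεw : ε < w)
    (hw : w ≤ 1 - ε) (hmw : m * w ≤ 1) (alg : OnlineAlg (W4 k ε)) :
    ∃ l : List (Item4 k ε), 1 ≤ OPTval k ε l ∧
      √(m * k) * ∑ p ∈ alg.A l, valAt k ε l p ≤ OPTval k ε l := by
  have hw₀ : 0 ≤ w := hε.trans hεw.le
  have hv : 0 ≤ (√(m * k : ℝ))⁻¹ := by positivity
  rcases alg.exists_subset_singleton_or_eq_singleton_zero fun t (ht : t < m * k) =>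
    exists_one_lt_hardItem_zero_add_succ hv hw₀ hw hεw ht with ⟨t, hsub, hzero⟩ | hkept
  · have hOPT := one_le_OPTval_hardItem (k := k) hv hw₀ hw hε t
    refine ⟨_, hOPT, le_trans ?_ hOPT⟩
    calc √(m * k) * _ ≤ √(m * k) * (√(m * k))⁻¹ := by
          gcongr
          exact sum_valAt_hardItem_le hv hw₀ hw hsub hzero
      _ ≤ 1 := mul_inv_le_one
  · refine ⟨_, one_le_OPTval_hardItem hv hw₀ hw hε (m * k), ?_⟩
    rw [hkept, Finset.sum_singleton, valAt_map_range (Nat.succ_pos _)]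
    calc √(m * k) * 1 = m * k * (√(m * k))⁻¹ := by
          rw [mul_one, ← div_eq_mul_inv, Real.div_sqrt]
      _ ≤ _ := mul_le_OPTval_hardItem hv hw₀ hw hmw

lemma exists_nat_lt_and_le_add_one {a : ℝ} (ha : 0 < a) : ∃ m : ℕ, m < a ∧ a ≤ m + 1 := by
  obtain ⟨m, hm⟩ := Nat.exists_eq_succ_of_ne_zero (Nat.ceil_pos.2 ha).ne'
  refine ⟨m, Nat.lt_ceil.1 (hm ▸ m.lt_succ_self), ?_⟩
  exact_mod_cast hm ▸ Nat.le_ceil a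

theorem statement4_general {k : ℕ} {ε : ℝ} (hε₀ : 0 < ε) (hε : ε < 1 / 2)
    (alg : OnlineAlg (W4 k ε)) :
    ∃ l : List (Item4 k ε), 1 ≤ OPTval k ε l ∧
      √(k / ε) * ∑ p ∈ alg.A l, valAt k ε l p ≤ √2 * OPTval k ε l := by
  obtain ⟨m, hmε, hεm⟩ := exists_nat_lt_and_le_add_one (one_div_pos.2 hε₀)
  have hm : (2 : ℝ) ≤ m := by
    have htwo : 2 < 1 / ε := by rwa [lt_one_div two_pos hε₀]
    have hlt : (2 : ℝ) < m + 1 := htwo.trans_le hεm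
    exact_mod_cast Nat.lt_succ_iff.1 (by exact_mod_cast hlt)
  have hm₀ : (0 : ℝ) < m := two_pos.trans_le hm
  have hw : 1 / (m : ℝ) ≤ 1 - ε := by linarith [one_div_le_one_div_of_le two_pos hm]
  obtain ⟨l, hOPT, hALG⟩ := exists_sqrt_mul_sum_valAt_le_OPTval hε₀.le
    ((lt_one_div hm₀ hε₀).1 hmε) hw (mul_one_div_cancel hm₀.ne').le alg
  have hsqrt : √(k / ε) ≤ √2 * √(m * k) := by
    rw [← Real.sqrt_mul zero_le_two]
    gcongr
    calc (k : ℝ) / ε = 1 / ε * k := by ring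
      _ ≤ 2 * m * k := by gcongr; linarith
      _ = 2 * (m * k) := by ring
  refine ⟨l, hOPT, ?_⟩
  calc √(k / ε) * ∑ p ∈ alg.A l, valAt k ε l p
      ≤ √2 * √(m * k) * ∑ p ∈ alg.A l, valAt k ε l p := by
        gcongr
        exact Finset.sum_nonneg fun p _ => valAt_nonneg l p
    _ = √2 * (√(m * k) * ∑ p ∈ alg.A l, valAt k ε l p) := mul_assoc _ _ _
    _ ≤ √2 * OPTval k ε l := by gcongr

/-- Hardness for deterministic algorithms (generalizing Iwama–Zhang): with `ε = 1/(2n)`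
and `d = k` dimensions, every deterministic online algorithm with free disposal has an
instance with weights in `[0, 1-ε]^k` on which `OPT ≥ 1` and
`2·OPT ≥ √(k/ε)·ALG`, i.e. the competitive ratio is `Ω(√(k/ε))`. -/
theorem statement4 (n : ℕ) (hn : 2 ≤ n) (k : ℕ) (hk : 1 ≤ k)
    (alg : OnlineAlg (W4 k (1 / (2 * n)))) :
    ∃ l : List (Item4 k (1 / (2 * n))),
      1 ≤ OPTval k (1 / (2 * n)) l ∧
      Real.sqrt ((k : ℝ) / (1 / (2 * n))) *
          (∑ p ∈ alg.A l, valAt k (1 / (2 * n)) l p) ≤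
        2 * OPTval k (1 / (2 * n)) l := by
  have hn₂ : (2 : ℝ) < 2 * n := by norm_cast; lia
  obtain ⟨l, hOPT, hALG⟩ := statement4_general (by positivity)
    (one_div_lt_one_div_of_lt two_pos hn₂) alg
  exact ⟨l, hOPT, hALG.trans (by gcongr; exact Real.sqrt_le_self_iff.2 (.inr one_le_two))⟩
end

section
/- For every subset S ⊆ B_n of the final accepted set, f(S) ≥ f(∅) + ∑_{i : u_i ∈ S} v_i, where the sum is over those indices i ∈ {0, …, n−1} with u_i ∈ S. -/
open scoped BigOperators

/-!
Because an item can enter only on its own arrival, every item of `S` that arrived before `u i`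
already belongs to `B i`. Build `S` up by adding its items in order of arrival: when `u i` is added,
the part of `S` built so far lies inside `B i`, so by diminishing returns the gain is at least the
marginal value of `u i` over `B i`. Summing the gains gives the bound.
-/

/-- Submodularity of a function on a lattice; on `Finset U` the lattice operations are union and
intersection. -/
def IsSubmodular {L G : Type*} [Lattice L] [Add G] [LE G] (f : L → G) : Prop :=
  ∀ x y : L, f (x ⊔ y) + f (x ⊓ y) ≤ f x + f y

/-- The marginal value of the item `a` over the set `X`. -/
def marginalValue {U G : Type*} [DecidableEq U] [Sub G] (f : Finset U → G) (X : Finset U)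
    (a : U) : G :=
  f (insert a X) - f X

section Submodular

variable {U G : Type*} [DecidableEq U] [AddCommGroup G] [PartialOrder G] [IsOrderedAddMonoid G]
  {f : Finset U → G}

theorem IsSubmodular.marginalValue_le_marginalValue (hf : IsSubmodular f) {X Y : Finset U}
    (hXY : X ⊆ Y) {a : U} (ha : a ∉ Y) : marginalValue f Y a ≤ marginalValue f X a := by
  have hunion : insert a X ∪ Y = insert a Y := by
    rw [Finset.insert_union, Finset.union_eq_right.mpr hXY]
  have hinter : insert a X ∩ Y = X := by
    rw [Finset.insert_inter_of_notMem ha, Finset.inter_eq_left.mpr hXY]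
  have h : f (insert a X ∪ Y) + f (insert a X ∩ Y) ≤ f (insert a X) + f Y := hf _ _
  rw [hunion, hinter] at h
  exact sub_le_sub_iff.mpr h

theorem IsSubmodular.add_sum_marginalValue_le {ι : Type*} [LinearOrder ι]
    (hf : IsSubmodular f) {u : ι → U} {B : ι → Finset U} {I : Finset ι}
    (hnotMem : ∀ i ∈ I, u i ∉ B i)
    (hmem : ∀ i ∈ I, ∀ j ∈ I, j < i → u j ∈ B i) :
    f ∅ + ∑ i ∈ I, marginalValue f (B i) (u i) ≤ f (I.image u) := by
  induction I using Finset.induction_on_max with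
  | empty => simp
  | insert m I hlt ih =>
    have hgain : marginalValue f (B m) (u m) ≤ marginalValue f (I.image u) (u m) := by
      refine hf.marginalValue_le_marginalValue (Finset.image_subset_iff.mpr fun j hj => ?_)
        (hnotMem m (Finset.mem_insert_self m I))
      exact hmem m (Finset.mem_insert_self m I) j (Finset.mem_insert_of_mem hj) (hlt j hj)
    have hI := ih (fun i hi => hnotMem i (Finset.mem_insert_of_mem hi))
      (fun i hi j hj => hmem i (Finset.mem_insert_of_mem hi) j (Finset.mem_insert_of_mem hj))
    calc f ∅ + ∑ i ∈ insert m I, marginalValue f (B i) (u i)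
        = marginalValue f (B m) (u m) + (f ∅ + ∑ i ∈ I, marginalValue f (B i) (u i)) := by
          rw [Finset.sum_insert fun hm => (hlt m hm).false, add_left_comm]
      _ ≤ marginalValue f (I.image u) (u m) + f (I.image u) := add_le_add hgain hI
      _ = f ((insert m I).image u) := by
          rw [marginalValue, sub_add_cancel, Finset.image_insert]

end Submodular

theorem exists_eq_of_mem_of_notMem_of_succ_subset_insert {U : Type*} [DecidableEq U] {n : ℕ}
    {u : Fin n → U} {B : Fin (n + 1) → Finset U}
    (hstep : ∀ i : Fin n, B i.succ ⊆ insert (u i) (B i.castSucc)) {i j : Fin (n + 1)}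
    (hij : i ≤ j) {x : U} (hxj : x ∈ B j) (hxi : x ∉ B i) :
    ∃ k : Fin n, i ≤ k.castSucc ∧ k.castSucc < j ∧ u k = x := by
  induction j using Fin.induction with
  | zero => exact absurd (Fin.le_zero_iff.mp hij ▸ hxj) hxi
  | succ k ih =>
    have hik : i ≤ k.castSucc :=
      Fin.le_castSucc_iff.mpr (hij.lt_of_ne fun h => hxi (h ▸ hxj))
    rcases Finset.mem_insert.mp (hstep k hxj) with hx | hx
    · exact ⟨k, hik, k.castSucc_lt_succ, hx.symm⟩
    · obtain ⟨l, hil, hlk, hl⟩ := ih hik hx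
      exact ⟨l, hil, hlk.trans k.castSucc_lt_succ, hl⟩

/-- With items discarded along the way, `B i` is the set of items held when `u i` arrives. -/
theorem statement5_general {U G : Type*} [DecidableEq U] [AddCommGroup G] [PartialOrder G]
    [IsOrderedAddMonoid G] {f : Finset U → G} (hf : IsSubmodular f) {n : ℕ} {u : Fin n → U}
    (hinj : Function.Injective u) {B : Fin (n + 1) → Finset U} (hB0 : B 0 = ∅)
    (hstep : ∀ i : Fin n, B i.succ ⊆ insert (u i) (B i.castSucc)) {S : Finset U}
    (hS : S ⊆ B (Fin.last n)) :
    f ∅ + ∑ i with u i ∈ S, marginalValue f (B i.castSucc) (u i) ≤ f S := by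
  have notMem_zero (x : U) : x ∉ B 0 := hB0 ▸ Finset.notMem_empty x
  have himage : ({i | u i ∈ S} : Finset (Fin n)).image u = S := by
    refine Finset.Subset.antisymm (Finset.image_subset_iff.mpr fun i hi => by simpa using hi)
      fun x hx => ?_
    obtain ⟨k, -, -, rfl⟩ := exists_eq_of_mem_of_notMem_of_succ_subset_insert hstep
      (Fin.zero_le _) (hS hx) (notMem_zero x)
    exact Finset.mem_image_of_mem u (by simpa using hx)
  have hnotMem (i : Fin n) : u i ∉ B i.castSucc := fun hi => by
    obtain ⟨k, -, hki, hk⟩ := exists_eq_of_mem_of_notMem_of_succ_subset_insert hstep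
      (Fin.zero_le _) hi (notMem_zero (u i))
    exact hki.ne (congrArg Fin.castSucc (hinj hk))
  have hmem (i j : Fin n) (hj : u j ∈ S) (hji : j < i) : u j ∈ B i.castSucc := by
    by_contra hi
    obtain ⟨k, hik, -, hk⟩ := exists_eq_of_mem_of_notMem_of_succ_subset_insert hstep
      (Fin.le_last _) (hS hj) hi
    exact hji.not_ge (hinj hk ▸ Fin.castSucc_le_castSucc_iff.mp hik)
  calc f ∅ + ∑ i with u i ∈ S, marginalValue f (B i.castSucc) (u i)
      ≤ f (({i | u i ∈ S} : Finset (Fin n)).image u) :=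
        hf.add_sum_marginalValue_le (fun i _ => hnotMem i)
          fun i _ j hj => hmem i j (Finset.mem_filter.mp hj).2
    _ = f S := by rw [himage]

/-- If `f` is submodular, items `u 0, …, u (n-1)` arrive in order, `B i` is the set of
items ever accepted before the arrival of `u i` (so `B (i+1)` is either `B i` or
`B i ∪ {u i}` with `u i ∉ B i`), and `v i = f(B i ∪ {u i}) − f(B i)` is the marginal
value of `u i` upon arrival, then for every subset `S` of the final accepted set `B n`,
`f S ≥ f ∅ + ∑_{i : u i ∈ S} v i`. -/
theorem statement5 {U : Type*} [DecidableEq U] (f : Finset U → ℝ)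
    (hsub : ∀ X Y : Finset U, f (X ∪ Y) + f (X ∩ Y) ≤ f X + f Y)
    (n : ℕ) (u : Fin n → U) (hinj : Function.Injective u)
    (B : Fin (n + 1) → Finset U) (hB0 : B 0 = ∅)
    (hstep : ∀ i : Fin n, B i.succ = B i.castSucc ∨
      B i.succ = insert (u i) (B i.castSucc))
    (hnot : ∀ i : Fin n, u i ∉ B i.castSucc)
    (S : Finset U) (hS : S ⊆ B (Fin.last n)) :
    f ∅ + ∑ i ∈ Finset.univ.filter (fun i : Fin n => u i ∈ S),
        (f (insert (u i) (B i.castSucc)) - f (B i.castSucc)) ≤ f S := by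
  exact statement5_general hsub hinj hB0
    (fun i => (hstep i).elim (fun h => h ▸ Finset.subset_insert _ _) (fun h => h.subset)) hS
end

section
/- For all natural numbers m, s, r, the binomial coefficients satisfy m^r · C(m − s, r) ≤ (m − s)^r · C(m, r), where m − s denotes truncated subtraction in ℕ and C(·,·) is the binomial coefficient. (Equivalently, when C(m, r) > 0 and s ≤ m, the probability that a uniformly random r-element subset of an m-element set avoids a fixed s-element subset is C(m−s, r)/C(m, r) ≤ ((m−s)/m)^r = (1 − s/m)^r.) -/
/-! Dropping the common factor `r!`, the claim compares `m ^ r * ∏ i < r, (n - i)` with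
`n ^ r * ∏ i < r, (m - i)` for `n = m - s ≤ m`, and this holds factor by factor: `m * (n - i)` and
`n * (m - i)` arise from the same product `m * n` by subtracting `m * i` and `n * i`. -/

theorem mul_tsub_le_mul_tsub_of_le {R : Type*} [NonUnitalCommSemiring R] [LinearOrder R]
    [CanonicallyOrderedAdd R] [Sub R] [OrderedSub R] [AddLeftReflectLE R] {m n : R} (h : n ≤ m)
    (k : R) : m * (n - k) ≤ n * (m - k) :=
  calc
    m * (n - k) = m * n - m * k := mul_tsub m n k
    _ ≤ m * n - n * k := tsub_le_tsub_left (mul_le_mul_left h k) (m * n)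
    _ = n * (m - k) := by rw [mul_tsub, mul_comm m n]

theorem pow_mul_descFactorial_le_pow_mul_descFactorial {m n : ℕ} (h : n ≤ m) (r : ℕ) :
    m ^ r * n.descFactorial r ≤ n ^ r * m.descFactorial r := by
  induction r with
  | zero => simp
  | succ r ih =>
    calc
      m ^ (r + 1) * n.descFactorial (r + 1) = m * (n - r) * (m ^ r * n.descFactorial r) := by
        rw [Nat.descFactorial_succ]; ring
      _ ≤ n * (m - r) * (n ^ r * m.descFactorial r) :=
        Nat.mul_le_mul (mul_tsub_le_mul_tsub_of_le h r) ih
      _ = n ^ (r + 1) * m.descFactorial (r + 1) := by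
        rw [Nat.descFactorial_succ]; ring

theorem pow_mul_choose_le_pow_mul_choose {m n : ℕ} (h : n ≤ m) (r : ℕ) :
    m ^ r * n.choose r ≤ n ^ r * m.choose r := by
  refine Nat.le_of_mul_le_mul_left ?_ r.factorial_pos
  simpa only [Nat.descFactorial_eq_factorial_mul_choose, Nat.mul_left_comm] using
    pow_mul_descFactorial_le_pow_mul_descFactorial h r

/-- For all naturals `m, s, r`: `m^r · C(m − s, r) ≤ (m − s)^r · C(m, r)`
(with truncated subtraction). Equivalently, a uniformly random `r`-subset of an
`m`-set avoids a fixed `s`-subset with probability at most `(1 − s/m)^r`. -/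
theorem statement8 (m s r : ℕ) :
    m ^ r * Nat.choose (m - s) r ≤ (m - s) ^ r * Nat.choose m r :=
  pow_mul_choose_le_pow_mul_choose (m.sub_le s) r
end

section
/- For every index s ∈ {1, …, d}, the sum over all phases t = 1, …, d of the weights of the items (t, 1) on dimension σ(s) equals 1 − δ, i.e., ∑_{t=1}^{d} w_{t,1}(σ(s)) = 1 − δ ≤ 1. In particular, the d items (1,1), (2,1), …, (d,1) can all be accepted simultaneously without violating any of the d knapsack capacity constraints, so the offline optimum of the hard instance has value at least d. -/
open scoped BigOperators

/-- The weight of item `(t, j)` (1-based phase `t`, 1-based index `j`) on dimension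
`i : Fin d` of the hard instance, where `δ = 2^{-2d}` and `σ` is a permutation of the
`d` dimensions. Writing `s ∈ {1, …, d}` for the 1-based position with `σ(s) = i`:
the weight is `0` if `s ≤ t − 1`, is `1 − (2^t − 1)·δ` if `s = t + j − 1`, and is
`2^t·δ` otherwise. -/
noncomputable def whard (d : ℕ) (σ : Equiv.Perm (Fin d)) (t j : ℕ) (i : Fin d) : ℝ :=
  let s : ℕ := ((σ.symm i : Fin d) : ℕ) + 1
  let δ : ℝ := (1 / 2) ^ (2 * d)
  if s ≤ t - 1 then 0
  else if s = t + j - 1 then 1 - ((2 : ℝ) ^ t - 1) * δ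
  else (2 : ℝ) ^ t * δ

/-!
Fix the dimension `σ(s)`, with `s` counted from `1`. Among the items `(t, 1)`, phases `t > s`
contribute nothing to it, phase `s` contributes `1 - (2 ^ s - 1) * δ`, and the phases `t < s`
contribute the geometric sum `2 * δ + ⋯ + 2 ^ (s - 1) * δ = (2 ^ s - 2) * δ`. The large item is
thus scaled so as to leave exactly one `δ` more than the earlier phases have used.
-/

section Weights

variable {d t j : ℕ} (σ : Equiv.Perm (Fin d)) {s : Fin d}

lemma whard_apply_of_lt (h : (s : ℕ) + 1 < t) : whard d σ t j (σ s) = 0 := by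
  have h_le : (s : ℕ) + 1 ≤ t - 1 := Nat.le_sub_one_of_lt h
  simp only [whard, Equiv.symm_apply_apply, if_pos h_le]

lemma whard_apply_of_eq (hj : 0 < j) (h : (s : ℕ) + 1 = t + j - 1) :
    whard d σ t j (σ s) = 1 - ((2 : ℝ) ^ t - 1) * (1 / 2) ^ (2 * d) := by
  have h_not_le : ¬(s : ℕ) + 1 ≤ t - 1 := by omega
  simp only [whard, Equiv.symm_apply_apply, if_neg h_not_le, if_pos h]

lemma whard_apply_of_le_of_ne (h_le : t ≤ (s : ℕ) + 1) (h_ne : (s : ℕ) + 1 ≠ t + j - 1) :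
    whard d σ t j (σ s) = (2 : ℝ) ^ t * (1 / 2) ^ (2 * d) := by
  have h_not_le : ¬(s : ℕ) + 1 ≤ t - 1 := by omega
  simp only [whard, Equiv.symm_apply_apply, if_neg h_not_le, if_neg h_ne]

lemma sum_Icc_whard_of_add_le {n : ℕ} (h : n + j ≤ (s : ℕ) + 1) :
    ∑ t ∈ Finset.Icc 1 n, whard d σ t j (σ s) =
      ((2 : ℝ) ^ (n + 1) - 2) * (1 / 2) ^ (2 * d) := by
  have h_small : ∀ t ∈ Finset.Icc 1 n,
      whard d σ t j (σ s) = (2 : ℝ) ^ t * (1 / 2) ^ (2 * d) := by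
    intro t ht
    rw [Finset.mem_Icc] at ht
    exact whard_apply_of_le_of_ne σ (by omega) (by omega)
  have h_geom : ∑ t ∈ Finset.Icc 1 n, (2 : ℝ) ^ t = 2 ^ (n + 1) - 2 := by
    rw [← Finset.Ico_add_one_right_eq_Icc, geom_sum_Ico (by norm_num) (by omega)]
    norm_num
  rw [Finset.sum_congr rfl h_small, ← Finset.sum_mul, h_geom]

lemma sum_Icc_whard_of_eq {n : ℕ} (hj : 0 < j) (h : (s : ℕ) + 1 = n + j) :
    ∑ t ∈ Finset.Icc 1 (n + 1), whard d σ t j (σ s) = 1 - (1 / 2 : ℝ) ^ (2 * d) := by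
  rw [Finset.sum_Icc_succ_top (by omega), sum_Icc_whard_of_add_le σ h.ge,
    whard_apply_of_eq σ hj (by omega)]
  ring

end Weights

/-- On every dimension `σ(s)`, the items `(t, 1)` for `t = 1, …, d` have total weight
exactly `1 − δ ≤ 1`; hence they can all be accepted simultaneously and the offline
optimum of the hard instance is at least `d`. Here `s : Fin d` represents the 1-based
index `(s : ℕ) + 1 ∈ {1, …, d}`. -/
theorem statement10 (d : ℕ) (hd : 1 ≤ d) (σ : Equiv.Perm (Fin d)) (s : Fin d) :
    (∑ t ∈ Finset.Icc 1 d, whard d σ t 1 (σ s)) = 1 - (1 / 2 : ℝ) ^ (2 * d) ∧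
    (1 - (1 / 2 : ℝ) ^ (2 * d)) ≤ 1 := by
  constructor
  · have h_zero : ∀ t ∈ Finset.Icc 1 d, t ∉ Finset.Icc 1 ((s : ℕ) + 1) →
        whard d σ t 1 (σ s) = 0 := by
      intro t ht ht'
      rw [Finset.mem_Icc] at ht ht'
      exact whard_apply_of_lt σ (by omega)
    have h_subset : Finset.Icc 1 ((s : ℕ) + 1) ⊆ Finset.Icc 1 d :=
      Finset.Icc_subset_Icc_right s.isLt
    rw [← Finset.sum_subset h_subset h_zero]
    exact sum_Icc_whard_of_eq σ one_pos rfl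
  · exact sub_le_self _ (by positivity)
end

section
/- For every phase t ∈ {1, …, d − 1}, every index j ∈ {2, …, d + 1 − t} (i.e., any item of phase t other than (t,1)), and every index j' ∈ {1, …, d − t}, there exists a dimension i ∈ {1, …, d} such that w_{t,j}(i) + w_{t+1,j'}(i) > 1. In particular, if an algorithm keeps an item of phase t other than (t, 1), then unless it disposes of this item it cannot accept any item of phase t + 1. -/
open scoped BigOperators

/-!
On the dimension `σ(t + j − 1)`, where item `(t, j)` has its heavy weight, only `(2^t − 1)·δ` of
the capacity is left. An item of any phase `t'` with `t ≤ t' ≤ t + j − 1` weighs at least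
`2^{t'}·δ` there: its weight is not `0`, and `δ = 2^{-2d}` is so small that the heavy weight
exceeds the light one.
-/

/-- The weight `2^t·δ` of a phase-`t` item on the dimensions where it is neither `0` nor heavy;
it depends on the number `d` of dimensions through `δ = 2^{-2d}`. -/
noncomputable def lightWeight (d t : ℕ) : ℝ :=
  (2 : ℝ) ^ t * (1 / 2) ^ (2 * d)

/-- The weight `1 − (2^t − 1)·δ` of an item `(t, j)` on the single dimension
`σ(t + j − 1)`. -/
noncomputable def heavyWeight (d t : ℕ) : ℝ :=
  1 - ((2 : ℝ) ^ t - 1) * (1 / 2) ^ (2 * d)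

theorem one_lt_heavyWeight_add_lightWeight (d : ℕ) {t t' : ℕ} (htt' : t ≤ t') :
    1 < heavyWeight d t + lightWeight d t' := by
  have hδ : (0 : ℝ) < (1 / 2) ^ (2 * d) := by positivity
  calc (1 : ℝ)
      < heavyWeight d t + lightWeight d t := by
        unfold heavyWeight lightWeight
        linarith
    _ ≤ heavyWeight d t + lightWeight d t' := by
        unfold lightWeight
        gcongr
        exact one_le_two

theorem lightWeight_le_heavyWeight {d t : ℕ} (ht : t + 1 ≤ 2 * d) :
    lightWeight d t ≤ heavyWeight d t := by
  have hδ : (0 : ℝ) < (1 / 2) ^ (2 * d) := by positivity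
  have hsmall : (2 : ℝ) ^ (t + 1) * (1 / 2) ^ (2 * d) ≤ 1 := by
    rw [one_div_pow, mul_one_div, div_le_one (by positivity)]
    exact pow_le_pow_right₀ one_le_two ht
  rw [pow_succ] at hsmall
  unfold lightWeight heavyWeight
  linarith

theorem whard_apply_eq_heavyWeight {d : ℕ} (σ : Equiv.Perm (Fin d)) {t j : ℕ} {s : Fin d}
    (hj : 1 ≤ j) (hs : (s : ℕ) + 1 = t + j - 1) :
    whard d σ t j (σ s) = heavyWeight d t := by
  simp only [whard, Equiv.symm_apply_apply]
  rw [if_neg (by omega), if_pos hs, heavyWeight]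

theorem lightWeight_le_whard_apply {d : ℕ} (σ : Equiv.Perm (Fin d)) {t : ℕ} (j : ℕ) {s : Fin d}
    (hs : t ≤ (s : ℕ) + 1) :
    lightWeight d t ≤ whard d σ t j (σ s) := by
  simp only [whard, Equiv.symm_apply_apply]
  rw [if_neg (by omega)]
  split_ifs
  · exact lightWeight_le_heavyWeight (by omega)
  · exact le_rfl

theorem statement12_general {d : ℕ} (σ : Equiv.Perm (Fin d)) {t t' j : ℕ} (j' : ℕ)
    (ht : 1 ≤ t) (htt' : t ≤ t') (ht' : t' < t + j) (hj : t + j ≤ d + 1) :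
    ∃ i : Fin d, 1 < whard d σ t j i + whard d σ t' j' i := by
  obtain ⟨s, hs⟩ : ∃ s : Fin d, (s : ℕ) + 1 = t + j - 1 :=
    ⟨⟨t + j - 2, by omega⟩, by dsimp only; omega⟩
  refine ⟨σ s, ?_⟩
  calc 1 < heavyWeight d t + lightWeight d t' := one_lt_heavyWeight_add_lightWeight d htt'
    _ ≤ whard d σ t j (σ s) + whard d σ t' j' (σ s) :=
      add_le_add (whard_apply_eq_heavyWeight σ (by omega) hs).ge
        (lightWeight_le_whard_apply σ j' (by omega))

/-- Every item `(t, j)` of phase `t` other than `(t, 1)` conflicts with every item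
`(t+1, j')` of phase `t + 1`: on some dimension their weights sum to more than `1`.
Hence an algorithm keeping such an item cannot accept any item of phase `t + 1`
without disposing of it. -/
theorem statement12 (d : ℕ) (hd : 1 ≤ d) (σ : Equiv.Perm (Fin d))
    (t : ℕ) (ht1 : 1 ≤ t) (ht2 : t ≤ d - 1)
    (j : ℕ) (hj1 : 2 ≤ j) (hj2 : j ≤ d + 1 - t)
    (j' : ℕ) (hj'1 : 1 ≤ j') (hj'2 : j' ≤ d - t) :
    ∃ i : Fin d, 1 < whard d σ t j i + whard d σ (t + 1) j' i := by
  exact statement12_general σ j' ht1 (Nat.le_succ t) (by omega) (by omega)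
end
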